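/- Assume the late-expensive-obstacles assumption fails (i.e., there exists m ∈ {1,…,ℓ−1} with (Σ_{i=1}^m b_i)/(Σ_{i=1}^m a_i) ≥ (Σ_{i=m+1}^ℓ b_i)/(Σ_{i=m+1}^ℓ a_i)) and that D̂ is nonempty. Then there exists û ∈ {1,…,ℓ−1} such that every minimizer (c_1,…,c_{ℓ−1}) of Σ_{m=1}^ℓ (x_m^c + y_m^c) over D^c satisfies c_û = 0. -/

import Mathlib

open Finset

noncomputable section

/-- Membership in the domain `D` of the optimization problem. -/
def memD (ℓ : ℕ) (a b x y : ℕ → ℝ) : Prop :=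
  (∀ i ∈ Finset.Icc 1 ℓ, 0 < x i ∧ 0 < y i) ∧
  (∑ i ∈ Finset.Icc 1 ℓ, (x i + y i)) ≤ 1 ∧
  (∀ m ∈ Finset.Icc 1 ℓ,
    0 ≤ ∑ i ∈ Finset.Icc 1 m, (x i - (a i) ^ 2 / (2 * x i) - (b i) ^ 2 / (2 * y i)))

/-- Membership in the domain `D̂`: elements of `D` where the cumulative condition holds with
equality for `m = ℓ`. -/
def memDhat (ℓ : ℕ) (a b x y : ℕ → ℝ) : Prop :=
  memD ℓ a b x y ∧
  (∑ i ∈ Finset.Icc 1 ℓ, (x i - (a i) ^ 2 / (2 * x i) - (b i) ^ 2 / (2 * y i))) = 0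

/-- The convention `c_0 = c_ℓ = 0`. -/
def cbar (ℓ : ℕ) (c : ℕ → ℝ) (m : ℕ) : ℝ := if m = 0 ∨ m = ℓ then 0 else c m

/-- Membership in `D^m(c, c')`. -/
def memDm (a b : ℕ → ℝ) (N : ℝ) (m : ℕ) (c c' x y : ℝ) : Prop :=
  0 < x ∧ 0 < y ∧ x + y ≤ N ∧ c + x - (a m) ^ 2 / (2 * x) - (b m) ^ 2 / (2 * y) = c'

/-- Membership in `D̃(c_1, …, c_{ℓ-1})`. -/
def memDtilde (ℓ : ℕ) (a b : ℕ → ℝ) (N : ℝ) (c x y : ℕ → ℝ) : Prop :=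
  (∑ i ∈ Finset.Icc 1 ℓ, (x i + y i)) ≤ 1 ∧
  ∀ m ∈ Finset.Icc 1 ℓ, memDm a b N m (cbar ℓ c (m - 1)) (cbar ℓ c m) (x m) (y m)

/-- Membership in `D^c`. -/
def memDc (ℓ : ℕ) (a b : ℕ → ℝ) (N : ℝ) (c : ℕ → ℝ) : Prop :=
  (∀ m ∈ Finset.Icc 1 (ℓ - 1), 0 ≤ c m) ∧ ∃ x y, memDtilde ℓ a b N c x y

/-- `(x, y)` minimizes `x + y` over `D^m(c, c')`. -/
def isArgminDm (a b : ℕ → ℝ) (N : ℝ) (m : ℕ) (c c' x y : ℝ) : Prop :=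
  memDm a b N m c c' x y ∧ ∀ x' y' : ℝ, memDm a b N m c c' x' y' → x + y ≤ x' + y'

/-- The projection `D^m_x(c, C)` of `D^m(c, C)` to the first coordinate. -/
def Dmx (a b : ℕ → ℝ) (N : ℝ) (m : ℕ) (c C : ℝ) : Set ℝ :=
  {x : ℝ | ∃ y : ℝ, memDm a b N m c C x y}

/-- The function `f(c̃) = sqrt((1 + c̃)/2 + sqrt(c̃²/4 + c̃))`. -/
def fval (c : ℝ) : ℝ := Real.sqrt ((1 + c) / 2 + Real.sqrt (c ^ 2 / 4 + c))

/-- `c̃ = (Σ b_i)² / (2 (Σ a_i)²)`. -/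
def ctilde (ℓ : ℕ) (a b : ℕ → ℝ) : ℝ :=
  (∑ i ∈ Finset.Icc 1 ℓ, b i) ^ 2 / (2 * (∑ i ∈ Finset.Icc 1 ℓ, a i) ^ 2)

/-- The objective function `F` on `ℝ^{2ℓ}`. -/
def Fobj (ℓ : ℕ) (a b x y : ℕ → ℝ) : ℝ :=
  (1 - ∑ i ∈ Finset.Icc 1 ℓ, (x i + y i)) *
  (1 - ∑ i ∈ Finset.Icc 1 ℓ, (y i + (a i) ^ 2 / (2 * x i) + (b i) ^ 2 / (2 * y i)))

/-- The late-expensive-obstacles assumption. -/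
def LateExpensive (ℓ : ℕ) (a b : ℕ → ℝ) : Prop :=
  ∀ m, 1 ≤ m → m < ℓ →
    (∑ i ∈ Finset.Icc 1 m, b i) / (∑ i ∈ Finset.Icc 1 m, a i) <
      (∑ i ∈ Finset.Icc (m + 1) ℓ, b i) / (∑ i ∈ Finset.Icc (m + 1) ℓ, a i)

/-- The ratio `(Σ_{j=p}^q b_j) / (Σ_{j=p}^q a_j)`. -/
def ratioBA (a b : ℕ → ℝ) (p q : ℕ) : ℝ :=
  (∑ j ∈ Finset.Icc p q, b j) / (∑ j ∈ Finset.Icc p q, a j)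

/-- `u` (on indices `0, …, n+1`) is an admissible division into blocks. -/
def AdmissibleDiv (ℓ : ℕ) (a b : ℕ → ℝ) (n : ℕ) (u : ℕ → ℕ) : Prop :=
  u 0 = 0 ∧ u (n + 1) = ℓ ∧ (∀ i ≤ n, u i < u (i + 1)) ∧
  ∀ i ≤ n, ∀ m, u i < m → m < u (i + 1) →
    ratioBA a b (u i + 1) m < ratioBA a b (m + 1) (u (i + 1))

/-- The canonical admissible division into blocks: the admissible division whose index
set is the intersection of the index sets of all admissible divisions into blocks. -/
def IsCanonicalDiv (ℓ : ℕ) (a b : ℕ → ℝ) (n : ℕ) (u : ℕ → ℕ) : Prop :=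
  AdmissibleDiv ℓ a b n u ∧
  ∀ k, (∃ i ≤ n + 1, u i = k) ↔
    ∀ (n' : ℕ) (u' : ℕ → ℕ), AdmissibleDiv ℓ a b n' u' → ∃ i ≤ n' + 1, u' i = k

/-- The minimal time to cross one block with branching length `A` and obstacle length `B`. -/
def blockTime (A B : ℝ) : ℝ :=
  A * fval (B ^ 2 / (2 * A ^ 2)) +
    B ^ 2 / (2 * A * (fval (B ^ 2 / (2 * A ^ 2)) - 1 / (2 * fval (B ^ 2 / (2 * A ^ 2)))))

/-- The total optimal time `T*` associated with a division into blocks. -/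
def Tstar (a b : ℕ → ℝ) (n : ℕ) (u : ℕ → ℕ) : ℝ :=
  ∑ i ∈ Finset.range (n + 1),
    blockTime (∑ j ∈ Finset.Icc (u i + 1) (u (i + 1)), a j)
      (∑ j ∈ Finset.Icc (u i + 1) (u (i + 1)), b j)

/-- The coefficient appearing in the formula for the optimal `c_m`. -/
def coefC (ℓ : ℕ) (a b : ℕ → ℝ) (m : ℕ) : ℝ :=
  ((∑ i ∈ Finset.Icc 1 m, a i) * (∑ i ∈ Finset.Icc (m + 1) ℓ, b i) -
    (∑ i ∈ Finset.Icc 1 m, b i) * (∑ i ∈ Finset.Icc (m + 1) ℓ, a i)) /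
    (∑ i ∈ Finset.Icc 1 ℓ, b i)

/-- The increment of the cumulative condition. -/
def Ginc (a b x y : ℕ → ℝ) (i : ℕ) : ℝ :=
  x i - (a i) ^ 2 / (2 * x i) - (b i) ^ 2 / (2 * y i)

/-- Convex combination. -/
def cmb (e : ℝ) (x x' : ℕ → ℝ) (i : ℕ) : ℝ := (1 - e) * x i + e * x' i

theorem inv_conv_lt (k x x' e : ℝ) (hk : 0 < k) (hx : 0 < x) (hx' : 0 < x') (he : 0 < e)
    (he1 : e < 1) (hne : x ≠ x') :
    k ^ 2 / (2 * ((1 - e) * x + e * x')) <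
      (1 - e) * (k ^ 2 / (2 * x)) + e * (k ^ 2 / (2 * x')) := by
  have h1 : 0 < 1 - e := by linarith
  have hp : 0 < (1 - e) * x + e * x' := by positivity
  have key : (1 - e) * (k ^ 2 / (2 * x)) + e * (k ^ 2 / (2 * x')) -
      k ^ 2 / (2 * ((1 - e) * x + e * x')) =
      k ^ 2 * ((1 - e) * e * (x - x') ^ 2) / (2 * x * x' * ((1 - e) * x + e * x')) := by
    field_simp
    ring
  have hsq : 0 < (x - x') ^ 2 := by
    have : x - x' ≠ 0 := sub_ne_zero.mpr hne
    positivity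
  have : 0 < k ^ 2 * ((1 - e) * e * (x - x') ^ 2) / (2 * x * x' * ((1 - e) * x + e * x')) := by
    positivity
  linarith

theorem inv_conv_le (k x x' e : ℝ) (hk : 0 < k) (hx : 0 < x) (hx' : 0 < x') (he : 0 < e)
    (he1 : e < 1) :
    k ^ 2 / (2 * ((1 - e) * x + e * x')) ≤
      (1 - e) * (k ^ 2 / (2 * x)) + e * (k ^ 2 / (2 * x')) := by
  by_cases hne : x = x'
  · subst hne
    have : (1 - e) * x + e * x = x := by ring
    rw [this]
    linarith
  · exact (inv_conv_lt k x x' e hk hx hx' he he1 hne).le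

theorem Ginc_conc (a b x y x' y' : ℕ → ℝ) (e : ℝ) (i : ℕ) (ha : 0 < a i) (hb : 0 < b i)
    (hx : 0 < x i) (hy : 0 < y i) (hx' : 0 < x' i) (hy' : 0 < y' i) (he : 0 < e) (he1 : e < 1) :
    (1 - e) * Ginc a b x y i + e * Ginc a b x' y' i ≤ Ginc a b (cmb e x x') (cmb e y y') i := by
  have h1 := inv_conv_le (a i) (x i) (x' i) e ha hx hx' he he1
  have h2 := inv_conv_le (b i) (y i) (y' i) e hb hy hy' he he1
  simp only [Ginc, cmb]
  linarith

theorem Ginc_conc_lt (a b x y x' y' : ℕ → ℝ) (e : ℝ) (i : ℕ) (ha : 0 < a i) (hb : 0 < b i)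
    (hx : 0 < x i) (hy : 0 < y i) (hx' : 0 < x' i) (hy' : 0 < y' i) (he : 0 < e) (he1 : e < 1)
    (hne : ¬ (x i = x' i ∧ y i = y' i)) :
    (1 - e) * Ginc a b x y i + e * Ginc a b x' y' i < Ginc a b (cmb e x x') (cmb e y y') i := by
  have h1 := inv_conv_le (a i) (x i) (x' i) e ha hx hx' he he1
  have h2 := inv_conv_le (b i) (y i) (y' i) e hb hy hy' he he1
  simp only [Ginc, cmb]
  by_cases h : x i = x' i
  · have h3 := inv_conv_lt (b i) (y i) (y' i) e hb hy hy' he he1 (fun h' => hne ⟨h, h'⟩)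
    linarith
  · have h3 := inv_conv_lt (a i) (x i) (x' i) e ha hx hx' he he1 h
    linarith

/-- Partial sums of an element of `D̃` are the `c_m`. -/
theorem partial_eq (ℓ : ℕ) (a b : ℕ → ℝ) (N : ℝ) (c x y : ℕ → ℝ)
    (h : ∀ m ∈ Finset.Icc 1 ℓ, memDm a b N m (cbar ℓ c (m - 1)) (cbar ℓ c m) (x m) (y m)) :
    ∀ m ≤ ℓ, ∑ i ∈ Finset.Icc 1 m, Ginc a b x y i = cbar ℓ c m := by
  intro m
  induction m with
  | zero => intro _; simp [cbar]
  | succ k ih =>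
    intro hk
    rw [Finset.sum_Icc_succ_top (by omega), ih (by omega)]
    have := (h (k + 1) (by simp; omega)).2.2.2
    simp only [Nat.add_sub_cancel] at this
    simp only [Ginc]
    linarith

/-- Every element of `D̂` gives an element of `D^c`. -/
theorem memDc_of_memDhat (ℓ : ℕ) (a b : ℕ → ℝ) (N : ℝ) (hN : 1 < N) (x y : ℕ → ℝ)
    (h : memDhat ℓ a b x y) :
    memDc ℓ a b N (fun m => ∑ i ∈ Finset.Icc 1 m, Ginc a b x y i) ∧
    ∀ m ∈ Finset.Icc 1 ℓ, memDm a b N m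
      (cbar ℓ (fun m => ∑ i ∈ Finset.Icc 1 m, Ginc a b x y i) (m - 1))
      (cbar ℓ (fun m => ∑ i ∈ Finset.Icc 1 m, Ginc a b x y i) m) (x m) (y m) := by
  obtain ⟨⟨hpos, hsum, hpar⟩, htot⟩ := h
  have hc : ∀ m, cbar ℓ (fun m => ∑ i ∈ Finset.Icc 1 m, Ginc a b x y i) m =
      ∑ i ∈ Finset.Icc 1 m, Ginc a b x y i := by
    intro m
    simp only [cbar]
    split_ifs with h
    · rcases h with rfl | rfl
      · simp
      · exact htot.symm
    · rfl
  have hmem : ∀ m ∈ Finset.Icc 1 ℓ, memDm a b N m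
      (cbar ℓ (fun m => ∑ i ∈ Finset.Icc 1 m, Ginc a b x y i) (m - 1))
      (cbar ℓ (fun m => ∑ i ∈ Finset.Icc 1 m, Ginc a b x y i) m) (x m) (y m) := by
    intro m hm
    refine ⟨(hpos m hm).1, (hpos m hm).2, ?_, ?_⟩
    · have := Finset.single_le_sum (f := fun i => x i + y i)
        (fun i hi => by have := hpos i hi; linarith [this.1, this.2]) hm
      linarith
    · rw [hc, hc]
      obtain ⟨k, rfl⟩ : ∃ k, m = k + 1 := ⟨m - 1, by have := (Finset.mem_Icc.mp hm).1; omega⟩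
      rw [Finset.sum_Icc_succ_top (by omega)]
      simp only [Nat.add_sub_cancel, Ginc]
      ring
  refine ⟨⟨fun m hm => hpar m ?_, x, y, hsum, hmem⟩, hmem⟩
  simp only [Finset.mem_Icc] at hm ⊢
  omega

/-- A point of `D` with strictly positive total can be improved to a point of `D̂`. -/
theorem improve (ℓ : ℕ) (hℓ : 1 ≤ ℓ) (a b : ℕ → ℝ) (hb : ∀ i ∈ Finset.Icc 1 ℓ, 0 < b i)
    (x y : ℕ → ℝ) (h : memD ℓ a b x y) (htot : 0 < ∑ i ∈ Finset.Icc 1 ℓ, Ginc a b x y i) :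
    ∃ y', memDhat ℓ a b x y' ∧
      ∑ i ∈ Finset.Icc 1 ℓ, (x i + y' i) < ∑ i ∈ Finset.Icc 1 ℓ, (x i + y i) := by
  obtain ⟨hpos, hsum, hpar⟩ := h
  obtain ⟨k, rfl⟩ : ∃ k, ℓ = k + 1 := ⟨ℓ - 1, by omega⟩
  set S := ∑ i ∈ Finset.Icc 1 (k + 1), Ginc a b x y i with hS
  have hmem : k + 1 ∈ Finset.Icc 1 (k + 1) := by simp
  have hy := (hpos _ hmem).2
  have hbk := hb _ hmem
  set Z := b (k + 1) ^ 2 / (2 * y (k + 1)) + S with hZ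
  have hZpos : 0 < Z := by positivity
  set v := b (k + 1) ^ 2 / (2 * Z) with hv
  have hvpos : 0 < v := by positivity
  have hvy : v < y (k + 1) := by
    rw [hv, div_lt_iff₀ (by positivity)]
    have : y (k + 1) * (2 * Z) = b (k + 1) ^ 2 + 2 * y (k + 1) * S := by
      rw [hZ]; field_simp
    rw [this]
    have : 0 < 2 * y (k + 1) * S := by positivity
    linarith
  have hbv : b (k + 1) ^ 2 / (2 * v) = Z := by
    rw [hv]; field_simp
  have hlow : ∀ i ∈ Finset.Icc 1 k, Function.update y (k + 1) v i = y i := by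
    intro i hi
    rw [Function.update_of_ne]
    have := (Finset.mem_Icc.mp hi).2
    omega
  have hlowG : ∀ m ≤ k, ∑ i ∈ Finset.Icc 1 m, Ginc a b x (Function.update y (k + 1) v) i =
      ∑ i ∈ Finset.Icc 1 m, Ginc a b x y i := by
    intro m hm
    refine Finset.sum_congr rfl fun i hi => ?_
    simp only [Ginc]
    rw [hlow i (by simp only [Finset.mem_Icc] at hi ⊢; omega)]
  have htot0 : ∑ i ∈ Finset.Icc 1 (k + 1), Ginc a b x (Function.update y (k + 1) v) i = 0 := by
    rw [Finset.sum_Icc_succ_top (by omega)] at hS ⊢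
    rw [hlowG k le_rfl]
    simp only [Ginc, Function.update_self] at hS ⊢
    rw [hbv, hZ]
    linarith
  have hlt : ∑ i ∈ Finset.Icc 1 (k + 1), (x i + Function.update y (k + 1) v i) <
      ∑ i ∈ Finset.Icc 1 (k + 1), (x i + y i) := by
    rw [Finset.sum_Icc_succ_top (by omega), Finset.sum_Icc_succ_top (by omega),
      Function.update_self,
      Finset.sum_congr rfl (fun i hi => by rw [hlow i hi])]
    linarith
  refine ⟨Function.update y (k + 1) v, ⟨⟨?_, by linarith, ?_⟩, htot0⟩, hlt⟩
  · intro i hi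
    refine ⟨(hpos i hi).1, ?_⟩
    by_cases hik : i = k + 1
    · subst hik; simpa using hvpos
    · rw [Function.update_of_ne hik]; exact (hpos i hi).2
  · intro m hm
    by_cases hmk : m = k + 1
    · subst hmk; exact htot0.ge
    · have h1 := hpar m hm
      have h2 := hlowG m (by simp only [Finset.mem_Icc] at hm; omega)
      simp only [Ginc] at h2
      rw [h2]; exact h1

/-- A minimizer over `D̂` coincides with any competitor that can be approached along a segment. -/
theorem rigid (ℓ : ℕ) (hℓ : 1 ≤ ℓ) (a b : ℕ → ℝ) (ha : ∀ i ∈ Finset.Icc 1 ℓ, 0 < a i)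
    (hb : ∀ i ∈ Finset.Icc 1 ℓ, 0 < b i) (x y x' y' : ℕ → ℝ) (hz : memDhat ℓ a b x y)
    (hmin : ∀ u v, memDhat ℓ a b u v →
      ∑ i ∈ Finset.Icc 1 ℓ, (x i + y i) ≤ ∑ i ∈ Finset.Icc 1 ℓ, (u i + v i))
    (hpos' : ∀ i ∈ Finset.Icc 1 ℓ, 0 < x' i ∧ 0 < y' i)
    (hsum' : ∑ i ∈ Finset.Icc 1 ℓ, (x' i + y' i) = ∑ i ∈ Finset.Icc 1 ℓ, (x i + y i))
    (htot' : 0 ≤ ∑ i ∈ Finset.Icc 1 ℓ, Ginc a b x' y' i)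
    (e : ℝ) (he : 0 < e) (he1 : e < 1)
    (hpar : ∀ m ∈ Finset.Icc 1 (ℓ - 1), 0 ≤ (1 - e) * ∑ i ∈ Finset.Icc 1 m, Ginc a b x y i +
      e * ∑ i ∈ Finset.Icc 1 m, Ginc a b x' y' i) :
    ∀ i ∈ Finset.Icc 1 ℓ, x i = x' i ∧ y i = y' i := by
  obtain ⟨⟨hpos, hsum, _⟩, htot⟩ := hz
  by_contra hcon
  push Not at hcon
  obtain ⟨j, hj, hjne⟩ := hcon
  have h1e : 0 < 1 - e := by linarith
  have hG : ∀ i ∈ Finset.Icc 1 ℓ, (1 - e) * Ginc a b x y i + e * Ginc a b x' y' i ≤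
      Ginc a b (cmb e x x') (cmb e y y') i := fun i hi =>
    Ginc_conc a b x y x' y' e i (ha i hi) (hb i hi) (hpos i hi).1 (hpos i hi).2
      (hpos' i hi).1 (hpos' i hi).2 he he1
  have htotpos : 0 < ∑ i ∈ Finset.Icc 1 ℓ, Ginc a b (cmb e x x') (cmb e y y') i := by
    have h1 : ∑ i ∈ Finset.Icc 1 ℓ, ((1 - e) * Ginc a b x y i + e * Ginc a b x' y' i) <
        ∑ i ∈ Finset.Icc 1 ℓ, Ginc a b (cmb e x x') (cmb e y y') i := by
      refine Finset.sum_lt_sum hG ⟨j, hj, ?_⟩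
      exact Ginc_conc_lt a b x y x' y' e j (ha j hj) (hb j hj) (hpos j hj).1 (hpos j hj).2
        (hpos' j hj).1 (hpos' j hj).2 he he1 (fun h => hjne h.1 h.2)
    rw [Finset.sum_add_distrib, ← Finset.mul_sum, ← Finset.mul_sum] at h1
    have h0 : ∑ i ∈ Finset.Icc 1 ℓ, Ginc a b x y i = 0 := htot
    rw [h0] at h1
    have : 0 ≤ e * ∑ i ∈ Finset.Icc 1 ℓ, Ginc a b x' y' i := by positivity
    linarith
  have hsumeq : ∑ i ∈ Finset.Icc 1 ℓ, (cmb e x x' i + cmb e y y' i) =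
      ∑ i ∈ Finset.Icc 1 ℓ, (x i + y i) := by
    have : ∀ i ∈ Finset.Icc 1 ℓ, cmb e x x' i + cmb e y y' i =
        (1 - e) * (x i + y i) + e * (x' i + y' i) := by
      intro i _; simp only [cmb]; ring
    rw [Finset.sum_congr rfl this, Finset.sum_add_distrib, ← Finset.mul_sum, ← Finset.mul_sum,
      hsum']
    ring
  have hmem : memD ℓ a b (cmb e x x') (cmb e y y') := by
    refine ⟨?_, by linarith, ?_⟩
    · intro i hi
      obtain ⟨h1, h2⟩ := hpos i hi
      obtain ⟨h3, h4⟩ := hpos' i hi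
      simp only [cmb]
      constructor <;> positivity
    · intro m hm
      by_cases hml : m = ℓ
      · subst hml; exact htotpos.le
      · have hm' : m ∈ Finset.Icc 1 (ℓ - 1) := by
          simp only [Finset.mem_Icc] at hm ⊢; omega
        have h1 := hpar m hm'
        rw [Finset.mul_sum, Finset.mul_sum, ← Finset.sum_add_distrib] at h1
        refine h1.trans (Finset.sum_le_sum fun i hi => hG i ?_)
        simp only [Finset.mem_Icc] at hm hi ⊢; omega
  obtain ⟨v, hv, hvlt⟩ := improve ℓ hℓ a b hb _ _ hmem htotpos
  have := hmin _ _ hv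
  linarith

/-- A minimizer with strictly positive partial sums forces the late-expensive assumption. -/
theorem interior_contra (ℓ : ℕ) (hℓ : 1 ≤ ℓ) (a b : ℕ → ℝ) (ha : ∀ i ∈ Finset.Icc 1 ℓ, 0 < a i)
    (hb : ∀ i ∈ Finset.Icc 1 ℓ, 0 < b i) (x y : ℕ → ℝ) (hz : memDhat ℓ a b x y)
    (hmin : ∀ u v, memDhat ℓ a b u v →
      ∑ i ∈ Finset.Icc 1 ℓ, (x i + y i) ≤ ∑ i ∈ Finset.Icc 1 ℓ, (u i + v i))
    (hpp : ∀ m ∈ Finset.Icc 1 (ℓ - 1), 0 < ∑ i ∈ Finset.Icc 1 m, Ginc a b x y i)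
    (m : ℕ) (hm1 : 1 ≤ m) (hml : m < ℓ) 
    (hfail : (∑ i ∈ Finset.Icc (m + 1) ℓ, b i) / (∑ i ∈ Finset.Icc (m + 1) ℓ, a i) ≤
        (∑ i ∈ Finset.Icc 1 m, b i) / (∑ i ∈ Finset.Icc 1 m, a i)) : False := by
  have hpos := hz.1.1
  have hne : (Finset.Icc 1 ℓ).Nonempty := ⟨1, by simp [hℓ]⟩
  set A := ∑ i ∈ Finset.Icc 1 ℓ, a i with hA
  set B := ∑ i ∈ Finset.Icc 1 ℓ, b i with hB
  set X := ∑ i ∈ Finset.Icc 1 ℓ, x i with hX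
  set Y := ∑ i ∈ Finset.Icc 1 ℓ, y i with hY
  have hApos : 0 < A := Finset.sum_pos ha hne
  have hBpos : 0 < B := Finset.sum_pos hb hne
  have hXpos : 0 < X := Finset.sum_pos (fun i hi => (hpos i hi).1) hne
  have hYpos : 0 < Y := Finset.sum_pos (fun i hi => (hpos i hi).2) hne
  set p := X / A - A / (2 * X) with hp
  set q := B / (2 * Y) with hq
  have hqpos : 0 < q := by positivity
  have hG' : ∀ i ∈ Finset.Icc 1 ℓ,
      Ginc a b (fun i => a i * (X / A)) (fun i => b i * (Y / B)) i = a i * p - b i * q := by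
    intro i hi
    have h1 := ha i hi
    have h2 := hb i hi
    simp only [Ginc, hp, hq]
    field_simp
  have hSG' : ∀ k ≤ ℓ, ∑ i ∈ Finset.Icc 1 k,
      Ginc a b (fun i => a i * (X / A)) (fun i => b i * (Y / B)) i =
      (∑ i ∈ Finset.Icc 1 k, a i) * p - (∑ i ∈ Finset.Icc 1 k, b i) * q := by
    intro k hk
    rw [Finset.sum_mul, Finset.sum_mul, ← Finset.sum_sub_distrib]
    refine Finset.sum_congr rfl fun i hi => hG' i ?_
    simp only [Finset.mem_Icc] at hi ⊢; omega
  have htot0 : ∑ i ∈ Finset.Icc 1 ℓ, Ginc a b x y i = 0 := hz.2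
  have htot' : 0 ≤ ∑ i ∈ Finset.Icc 1 ℓ,
      Ginc a b (fun i => a i * (X / A)) (fun i => b i * (Y / B)) i := by
    rw [hSG' ℓ le_rfl, ← hA, ← hB, ← htot0]
    have h1 := Finset.sq_sum_div_le_sum_sq_div (Finset.Icc 1 ℓ) a
      (g := fun i => 2 * x i) (fun i hi => by have := (hpos i hi).1; positivity)
    have h2 := Finset.sq_sum_div_le_sum_sq_div (Finset.Icc 1 ℓ) b
      (g := fun i => 2 * y i) (fun i hi => by have := (hpos i hi).2; positivity)
    rw [← Finset.mul_sum] at h1 h2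
    simp only [Ginc, Finset.sum_sub_distrib]
    have e1 : A * p = X - A ^ 2 / (2 * X) := by rw [hp]; field_simp
    have e2 : B * q = B ^ 2 / (2 * Y) := by rw [hq]; field_simp
    rw [e1, e2]
    linarith
  have hsum' : ∑ i ∈ Finset.Icc 1 ℓ, (a i * (X / A) + b i * (Y / B)) =
      ∑ i ∈ Finset.Icc 1 ℓ, (x i + y i) := by
    rw [Finset.sum_add_distrib, Finset.sum_add_distrib, ← Finset.sum_mul, ← Finset.sum_mul,
      ← hA, ← hB, ← hX, ← hY]
    field_simp
  obtain ⟨e, ⟨hee, he1⟩, he0⟩ : ∃ e : ℝ, ((∀ k ∈ Finset.Icc 1 (ℓ - 1),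
      0 < (1 - e) * ∑ i ∈ Finset.Icc 1 k, Ginc a b x y i +
      e * ∑ i ∈ Finset.Icc 1 k,
        Ginc a b (fun i => a i * (X / A)) (fun i => b i * (Y / B)) i) ∧ e < 1) ∧ 0 < e := by
    have hev : ∀ᶠ e in nhds (0 : ℝ), (∀ k ∈ Finset.Icc 1 (ℓ - 1),
      0 < (1 - e) * ∑ i ∈ Finset.Icc 1 k, Ginc a b x y i +
      e * ∑ i ∈ Finset.Icc 1 k,
        Ginc a b (fun i => a i * (X / A)) (fun i => b i * (Y / B)) i) ∧ e < 1 := by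
      refine Filter.Eventually.and ?_ (eventually_lt_nhds one_pos)
      rw [Filter.eventually_all_finset]
      intro k hk
      have hcont : Continuous fun e : ℝ => (1 - e) * ∑ i ∈ Finset.Icc 1 k, Ginc a b x y i +
        e * ∑ i ∈ Finset.Icc 1 k,
          Ginc a b (fun i => a i * (X / A)) (fun i => b i * (Y / B)) i := by fun_prop
      refine hcont.continuousAt.eventually (lt_mem_nhds ?_)
      simpa using hpp k hk
    have hev2 : ∀ᶠ e in nhdsWithin (0 : ℝ) (Set.Ioi 0), 0 < e := self_mem_nhdsWithin
    exact ((hev.filter_mono nhdsWithin_le_nhds).and hev2).exists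
  have heq := rigid ℓ hℓ a b ha hb x y (fun i => a i * (X / A)) (fun i => b i * (Y / B)) hz hmin
    (fun i hi => by
      have h1 := ha i hi
      have h2 := hb i hi
      constructor <;> positivity) hsum' htot' e he0 he1 (fun k hk => (hee k hk).le)
  have hP : ∀ k ≤ ℓ, ∑ i ∈ Finset.Icc 1 k, Ginc a b x y i =
      (∑ i ∈ Finset.Icc 1 k, a i) * p - (∑ i ∈ Finset.Icc 1 k, b i) * q := by
    intro k hk
    rw [← hSG' k hk]
    refine Finset.sum_congr rfl fun i hi => ?_
    have := heq i (by simp only [Finset.mem_Icc] at hi ⊢; omega)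
    simp only [Ginc]
    rw [this.1, this.2]
  have hm := hpp m (by simp only [Finset.mem_Icc]; omega)
  rw [hP m hml.le] at hm
  rw [hP ℓ le_rfl, ← hA, ← hB] at htot0
  have hsplit : ∀ f : ℕ → ℝ, ∑ i ∈ Finset.Icc 1 m, f i + ∑ i ∈ Finset.Icc (m + 1) ℓ, f i =
      ∑ i ∈ Finset.Icc 1 ℓ, f i := by
    intro f
    have h1 : ∀ r s : ℕ, Finset.Icc r s = Finset.Ico r (s + 1) := by
      intro r s; ext i; simp only [Finset.mem_Icc, Finset.mem_Ico]; omega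
    rw [h1, h1, h1]
    exact Finset.sum_Ico_consecutive f (by omega) (by omega)
  have hsA := hsplit a
  have hsB := hsplit b
  rw [← hA] at hsA
  rw [← hB] at hsB
  have hA1 : 0 < ∑ i ∈ Finset.Icc 1 m, a i := Finset.sum_pos
    (fun i hi => ha i (by simp only [Finset.mem_Icc] at hi ⊢; omega)) ⟨1, by simp [hm1]⟩
  have hA2 : 0 < ∑ i ∈ Finset.Icc (m + 1) ℓ, a i := Finset.sum_pos
    (fun i hi => ha i (by simp only [Finset.mem_Icc] at hi ⊢; omega))
    ⟨ℓ, by simp only [Finset.mem_Icc]; omega⟩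
  rw [div_le_div_iff₀ hA2 hA1] at hfail
  generalize (∑ i ∈ Finset.Icc 1 m, a i) = A1 at *
  generalize (∑ i ∈ Finset.Icc (m + 1) ℓ, a i) = A2 at *
  generalize (∑ i ∈ Finset.Icc 1 m, b i) = B1 at *
  generalize (∑ i ∈ Finset.Icc (m + 1) ℓ, b i) = B2 at *
  have h2 : A2 * p - B2 * q < 0 := by
    have : (A1 + A2) * p - (B1 + B2) * q = 0 := by rw [hsA, hsB]; exact htot0
    linarith
  have h3 : 0 < A2 * (A1 * p - B1 * q) := by positivity
  have h4 : A1 * (A2 * p - B2 * q) < 0 := mul_neg_of_pos_of_neg hA1 h2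
  have h5 := mul_le_mul_of_nonneg_right hfail hqpos.le
  linarith

/-- If the late-expensive-obstacles assumption fails and `D̂` is nonempty, then
there is `û ∈ {1,…,ℓ−1}` such that every minimizer of `Σ_m (x_m^c + y_m^c)` over `D^c`
satisfies `c_û = 0`. -/
theorem minimizer_vanishes_somewhere (ℓ : ℕ) (hℓ : 1 ≤ ℓ) (a b : ℕ → ℝ)
    (ha : ∀ i ∈ Finset.Icc 1 ℓ, 0 < a i) (hb : ∀ i ∈ Finset.Icc 1 ℓ, 0 < b i)
    (N : ℝ) (hN : 1 < N)
    (hfail : ∃ m : ℕ, 1 ≤ m ∧ m < ℓ ∧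
      (∑ i ∈ Finset.Icc (m + 1) ℓ, b i) / (∑ i ∈ Finset.Icc (m + 1) ℓ, a i) ≤
        (∑ i ∈ Finset.Icc 1 m, b i) / (∑ i ∈ Finset.Icc 1 m, a i))
    (hDhat : ∃ x y : ℕ → ℝ, memDhat ℓ a b x y)
    (xc yc : (ℕ → ℝ) → ℕ → ℝ)
    (hxcyc : ∀ c : ℕ → ℝ, memDc ℓ a b N c → ∀ m ∈ Finset.Icc 1 ℓ,
      isArgminDm a b N m (cbar ℓ c (m - 1)) (cbar ℓ c m) (xc c m) (yc c m)) :
    ∃ u : ℕ, 1 ≤ u ∧ u < ℓ ∧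
      ∀ c : ℕ → ℝ, memDc ℓ a b N c →
        (∀ c' : ℕ → ℝ, memDc ℓ a b N c' →
          (∑ m ∈ Finset.Icc 1 ℓ, (xc c m + yc c m)) ≤
            ∑ m ∈ Finset.Icc 1 ℓ, (xc c' m + yc c' m)) →
        c u = 0 := by
  obtain ⟨m, hm1, hml, hf⟩ := hfail
  -- properties of any minimizer
  have hprop : ∀ c : ℕ → ℝ, memDc ℓ a b N c →
      memDhat ℓ a b (xc c) (yc c) ∧
        ∀ k ∈ Finset.Icc 1 (ℓ - 1), ∑ i ∈ Finset.Icc 1 k, Ginc a b (xc c) (yc c) i = c k := by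
    intro c hc
    have hpe := partial_eq ℓ a b N c (xc c) (yc c) (fun k hk => (hxcyc c hc k hk).1)
    have hck : ∀ k ∈ Finset.Icc 1 (ℓ - 1),
        ∑ i ∈ Finset.Icc 1 k, Ginc a b (xc c) (yc c) i = c k := by
      intro k hk
      simp only [Finset.mem_Icc] at hk
      rw [hpe k (by omega), cbar, if_neg (by omega)]
    have ht : ∑ i ∈ Finset.Icc 1 ℓ, Ginc a b (xc c) (yc c) i = 0 := by
      rw [hpe ℓ le_rfl]; simp [cbar]
    refine ⟨⟨⟨fun i hi => ⟨(hxcyc c hc i hi).1.1, (hxcyc c hc i hi).1.2.1⟩, ?_, ?_⟩, ht⟩, hck⟩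
    · obtain ⟨_, x, y, hs, hxy⟩ := hc
      exact (Finset.sum_le_sum fun i hi =>
        (hxcyc c ⟨‹_›, x, y, hs, hxy⟩ i hi).2 _ _ (hxy i hi)).trans hs
    · intro k hk
      by_cases hkl : k = ℓ
      · subst hkl; exact ht.ge
      · have hk' : k ∈ Finset.Icc 1 (ℓ - 1) := by
          simp only [Finset.mem_Icc] at hk ⊢; omega
        have h1 := hc.1 k hk'
        rw [← hck k hk'] at h1
        exact h1
  have hopt : ∀ c : ℕ → ℝ, memDc ℓ a b N c →
      (∀ c' : ℕ → ℝ, memDc ℓ a b N c' →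
          (∑ m ∈ Finset.Icc 1 ℓ, (xc c m + yc c m)) ≤
            ∑ m ∈ Finset.Icc 1 ℓ, (xc c' m + yc c' m)) →
      ∀ u v, memDhat ℓ a b u v →
        ∑ i ∈ Finset.Icc 1 ℓ, (xc c i + yc c i) ≤ ∑ i ∈ Finset.Icc 1 ℓ, (u i + v i) := by
    intro c _ hmin u v huv
    obtain ⟨h1, h2⟩ := memDc_of_memDhat ℓ a b N hN u v huv
    exact (hmin _ h1).trans (Finset.sum_le_sum fun i hi => (hxcyc _ h1 i hi).2 _ _ (h2 i hi))
  by_cases hex : ∃ c : ℕ → ℝ, memDc ℓ a b N c ∧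
        (∀ c' : ℕ → ℝ, memDc ℓ a b N c' →
          (∑ m ∈ Finset.Icc 1 ℓ, (xc c m + yc c m)) ≤
            ∑ m ∈ Finset.Icc 1 ℓ, (xc c' m + yc c' m))
  swap
  · exact ⟨m, hm1, hml, fun c hc hmin => absurd ⟨c, hc, hmin⟩ hex⟩
  obtain ⟨c, hc, hmin⟩ := hex
  obtain ⟨hz, hpar⟩ := hprop c hc
  have hzmin := hopt c hc hmin
  obtain ⟨u, hu, hcu⟩ : ∃ u ∈ Finset.Icc 1 (ℓ - 1), c u = 0 := by
    by_contra hcon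
    push Not at hcon
    refine interior_contra ℓ hℓ a b ha hb (xc c) (yc c) hz hzmin ?_ m hm1 hml hf
    intro k hk
    rw [hpar k hk]
    exact lt_of_le_of_ne (hc.1 k hk) (hcon k hk).symm
  have hu' := Finset.mem_Icc.mp hu
  refine ⟨u, hu'.1, by omega, fun d hd hdmin => ?_⟩
  obtain ⟨hw, hpard⟩ := hprop d hd
  have heq := rigid ℓ hℓ a b ha hb (xc c) (yc c) (xc d) (yc d) hz hzmin hw.1.1
    (le_antisymm (hdmin c hc) (hmin d hd)) hw.2.ge (1 / 2) (by norm_num) (by norm_num) (by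
      intro k hk
      rw [hpar k hk, hpard k hk]
      have h1 := hc.1 k hk
      have h2 := hd.1 k hk
      linarith)
  rw [← hpard u hu, ← hcu, ← hpar u hu]
  refine Finset.sum_congr rfl fun i hi => ?_
  have := heq i (by simp only [Finset.mem_Icc] at hi ⊢; omega)
  simp only [Ginc]
  rw [this.1, this.2]
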